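/- There exist constants C > 0 and δ₀ ∈ (0,1) such that the following holds. Let g, M ∈ SL₂(ℝ) with M·i ≠ i and ‖g‖ ≥ 10·‖M‖, let δ ∈ (0, δ₀·‖M‖^{-2}), and let g₁ = h₁ g h₂ with h₁ ∈ SL₂(ℝ) satisfying ‖h₁‖² ≤ 2cosh δ and h₂ = k_α a_s k_β with |α|, |s|, |β| < δ. Then: (i) |‖g₁M‖² − ‖gM‖²| ≤ C·δ·‖g‖²·‖M‖²; and (ii) |tan(θ_{g₁} − θ_{g₁M}) − tan(θ_g − θ_{gM})| ≤ C·δ·‖M‖⁴/‖g‖². -/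

import Mathlib

/-!
Write `S = gᵀg`, `N = MMᵀ`, `G = tr S = ‖g‖²`, `m = tr N = ‖M‖²`, `τ = tr (SN) = ‖gM‖²` and
`κ = [S, N]₁₂`. The angle `theta g` is the argument of a complex number formed from the entries of
`ggᵀ`, and a computation with determinants one gives (`tan_formula`)
`tan (θ_g − θ_{gM}) = 2κ / (Gτ − 2m)`.
Everything thus depends on the three quantities `G`, `τ`, `κ`, and one has to see how they change.

The point is to lose no power of `m`. The relevant scale is `ρ = √(mGτ)`: since `N² ≤ mN`, one has
`‖gN‖² ≤ mτ`, hence `|κ| ≤ ρ` (`kap_sq_le`). Replacing `g` by `h₁g` changes `S` through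
`h₁ᵀh₁ = 1 + O(δ)`, so that `τ` changes by `O(δτ)` only. Replacing `g` by `gh₂` changes `τ` by
`2⟨F, gN⟩ + ‖FM‖²` with `‖F‖ = O(δ‖g‖)`, which is `O(δρ)` because `δm` is small (`right_norm`). In
both cases `G` changes by `O(δG)` and `κ` by `O(δGm)`. As `m⁻¹G ≤ τ ≤ mG` implies `ρ ≤ mG` and
`ρ ≤ mτ`, the first claim follows at once, and for the quotient both error terms, of sizes
`δGm / (Gτ)` and `ρ · δGρ / (Gτ)²`, are `O(δm/τ) = O(δm²/G)` (`quotient_le`).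
-/


open Matrix MeasureTheory Real Filter Topology
open scoped MatrixGroups Pointwise

noncomputable section

/-- `SL(2,ℝ)` as the special linear group of 2×2 real matrices. -/
abbrev SL2R := Matrix.SpecialLinearGroup (Fin 2) ℝ

instance : TopologicalSpace SL2R :=
  show TopologicalSpace {A : Matrix (Fin 2) (Fin 2) ℝ // A.det = 1} from inferInstance

instance : MeasurableSpace SL2R := borel SL2R

/-- Squared Frobenius norm `‖g‖² = a² + b² + c² + d²`. -/
def fnormSq (g : SL2R) : ℝ :=
  (g : Matrix (Fin 2) (Fin 2) ℝ) 0 0 ^ 2 + (g : Matrix (Fin 2) (Fin 2) ℝ) 0 1 ^ 2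
    + (g : Matrix (Fin 2) (Fin 2) ℝ) 1 0 ^ 2 + (g : Matrix (Fin 2) (Fin 2) ℝ) 1 1 ^ 2

/-- Frobenius norm `‖g‖`. -/
def fnorm (g : SL2R) : ℝ := Real.sqrt (fnormSq g)

/-- The angle `θ_g = arg((g·i − i)/(g·i + i)) ∈ (−π, π]`; equals `0` when `g·i = i`. -/
def theta (g : SL2R) : ℝ :=
  Complex.arg ((((g • UpperHalfPlane.I : UpperHalfPlane) : ℂ) - Complex.I)
    / (((g • UpperHalfPlane.I : UpperHalfPlane) : ℂ) + Complex.I))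

/-- Distance between two angles: the distance from `a − b` to the nearest element of `2πℤ`. -/
def angDist (a b : ℝ) : ℝ := |((a - b : ℝ) : Real.Angle).toReal|

/-- Inverse hyperbolic cosine. -/
def arccosh (x : ℝ) : ℝ := Real.log (x + Real.sqrt (x ^ 2 - 1))

/-- `ℓ(M) = arccosh(‖M‖²/2)`, the hyperbolic distance from `i` to `M·i`. -/
def ell (M : SL2R) : ℝ := arccosh (fnormSq M / 2)

/-- The pair-correlation density building block `f_ξ(ℓ)`. -/
def fxi (ξ l : ℝ) : ℝ :=
  if Real.sinh l ≤ ξ then 2 / ξ ^ 2 * l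
  else if 2 * Real.sinh (l / 2) ≤ ξ then
    2 / ξ ^ 2 * (l + Real.log (1 + ξ ^ 2)
      - 2 * Real.log (Real.cosh l + Real.sqrt (Real.sinh l ^ 2 - ξ ^ 2)))
  else 2 / ξ ^ 2 * (l - Real.log (Real.cosh l + Real.sqrt (Real.sinh l ^ 2 - ξ ^ 2)))

/-- The rotation matrix `k_φ ∈ SL(2,ℝ)`. -/
def kMat (φ : ℝ) : SL2R :=
  ⟨!![Real.cos (φ / 2), Real.sin (φ / 2); -Real.sin (φ / 2), Real.cos (φ / 2)], by
    rw [Matrix.det_fin_two_of]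
    linear_combination Real.sin_sq_add_cos_sq (φ / 2)⟩

/-- The diagonal matrix `a_t ∈ SL(2,ℝ)`. -/
def aMat (t : ℝ) : SL2R :=
  ⟨!![Real.exp (t / 2), 0; 0, Real.exp (-t / 2)], by
    rw [Matrix.det_fin_two_of, ← Real.exp_add]
    norm_num
    ring⟩

/-! ### The tangent formula -/

/-- `κ = [gᵀg, MMᵀ]₁₂`, the upper right entry of the (antisymmetric) commutator of `gᵀg` and
`MMᵀ`. -/
def kap (g M : SL2R) : ℝ :=
  ((g.1 0 0 ^ 2 + g.1 1 0 ^ 2) - (g.1 0 1 ^ 2 + g.1 1 1 ^ 2)) *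
      (M.1 0 0 * M.1 1 0 + M.1 0 1 * M.1 1 1)
    - (g.1 0 0 * g.1 0 1 + g.1 1 0 * g.1 1 1) *
      ((M.1 0 0 ^ 2 + M.1 0 1 ^ 2) - (M.1 1 0 ^ 2 + M.1 1 1 ^ 2))

/-- The complex number `(P₁₁ − P₂₂) − 2iP₁₂` with `P = ggᵀ`. It is a positive multiple of
`(g·i − i)/(g·i + i)`, so it has argument `theta g`. -/
def cpt (g : SL2R) : ℂ :=
  ⟨(g.1 0 0 ^ 2 + g.1 0 1 ^ 2) - (g.1 1 0 ^ 2 + g.1 1 1 ^ 2),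
    -2 * (g.1 0 0 * g.1 1 0 + g.1 0 1 * g.1 1 1)⟩

lemma det_eq (g : SL2R) : g.1 0 0 * g.1 1 1 - g.1 0 1 * g.1 1 0 = 1 := by
  rw [← Matrix.det_fin_two, g.2]

lemma two_le_fnormSq (g : SL2R) : 2 ≤ fnormSq g := by
  have h := det_eq g
  unfold fnormSq
  nlinarith [sq_nonneg (g.1 0 0 - g.1 1 1), sq_nonneg (g.1 0 1 + g.1 1 0)]

lemma theta_eq (g : SL2R) : theta g = Complex.arg (cpt g) := by
  have hdet := det_eq g
  obtain ⟨a, ha⟩ : ∃ a, a = g.1 0 0 := ⟨_, rfl⟩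
  obtain ⟨b, hb⟩ : ∃ b, b = g.1 0 1 := ⟨_, rfl⟩
  obtain ⟨c, hc⟩ : ∃ c, c = g.1 1 0 := ⟨_, rfl⟩
  obtain ⟨d, hd⟩ : ∃ d, d = g.1 1 1 := ⟨_, rfl⟩
  have hz : ((g • UpperHalfPlane.I : UpperHalfPlane) : ℂ)
      = ((a : ℂ) * Complex.I + b) / ((c : ℂ) * Complex.I + d) := by
    rw [UpperHalfPlane.specialLinearGroup_apply]
    simp [ha, hb, hc, hd]
  simp only [← ha, ← hb, ← hc, ← hd] at hdet
  have hn0 : (0 : ℝ) < (b - c) ^ 2 + (a + d) ^ 2 := by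
    nlinarith [sq_nonneg (a - d), sq_nonneg (b + c), sq_nonneg (b - c), sq_nonneg (a + d)]
  have hcd : (c : ℂ) * Complex.I + d ≠ 0 := by
    intro h
    have h1 := congrArg Complex.re h
    have h2 := congrArg Complex.im h
    simp at h1 h2
    subst h1 h2
    simp at hdet
  have hden : (a : ℂ) * Complex.I + b + Complex.I * ((c : ℂ) * Complex.I + d) ≠ 0 := by
    intro h
    have h1 := congrArg Complex.re h
    have h2 := congrArg Complex.im h
    simp at h1 h2
    nlinarith
  have hnC : (((b - c) ^ 2 + (a + d) ^ 2 : ℝ) : ℂ) ≠ 0 := by exact_mod_cast hn0.ne'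
  have hcpt : cpt g = ((a ^ 2 + b ^ 2 - (c ^ 2 + d ^ 2) : ℝ) : ℂ)
      + ((-2 * (a * c + b * d) : ℝ) : ℂ) * Complex.I := by
    apply Complex.ext <;> simp [cpt, ha, hb, hc, hd, -Complex.ofReal_pow]
  have key : (((g • UpperHalfPlane.I : UpperHalfPlane) : ℂ) - Complex.I)
      / (((g • UpperHalfPlane.I : UpperHalfPlane) : ℂ) + Complex.I)
      = ((((b - c) ^ 2 + (a + d) ^ 2)⁻¹ : ℝ) : ℂ) * cpt g := by
    rw [hz, hcpt, div_sub' hcd, div_add' _ _ _ hcd, div_div_div_cancel_right₀ hcd,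
      Complex.ofReal_inv, div_eq_iff (by convert hden using 1), mul_assoc,
      eq_inv_mul_iff_mul_eq₀ hnC]
    push_cast
    have hI := Complex.I_sq
    apply Complex.ext
    · simp [pow_two]; ring
    · simp [pow_two]; ring
  unfold theta
  rw [key, Complex.arg_real_mul _ (inv_pos.mpr hn0)]

lemma normSq_cpt (g : SL2R) : Complex.normSq (cpt g) = fnormSq g ^ 2 - 4 := by
  have h := det_eq g
  simp only [Complex.normSq_apply, cpt, fnormSq]
  linear_combination (-4 * (g.1 0 0 * g.1 1 1 - g.1 0 1 * g.1 1 0) - 4) * h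

lemma cpt_ne_zero (g : SL2R) (h : 2 < fnormSq g) : cpt g ≠ 0 := by
  rw [← Complex.normSq_pos, normSq_cpt]
  nlinarith

lemma tan_arg_sub_arg {z w : ℂ} (hz : z ≠ 0) (hw : w ≠ 0) :
    Real.tan (z.arg - w.arg)
      = (z.im * w.re - z.re * w.im) / (z.re * w.re + z.im * w.im) := by
  have h : ((z.arg - w.arg : ℝ) : Real.Angle) = ((z / w).arg : ℝ) := by
    rw [Complex.arg_div_coe_angle hz hw, Real.Angle.coe_sub]
  rw [← Real.Angle.tan_coe, h, Real.Angle.tan_coe, Complex.tan_arg, Complex.div_im,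
    Complex.div_re, ← sub_div, ← add_div, div_div_div_cancel_right₀]
  exact (Complex.normSq_pos.mpr hw).ne'

/-- The tangent is a function of `gᵀg` and `MMᵀ` alone: the real part of the relevant product is
computed with Cayley–Hamilton for `gᵀg`, the imaginary part with `g J gᵀ = J`. -/
lemma tan_formula (g M : SL2R) (h : 2 < fnormSq g) (h' : 2 < fnormSq (g * M)) :
    Real.tan (theta g - theta (g * M))
      = 2 * kap g M / (fnormSq g * fnormSq (g * M) - 2 * fnormSq M) := by
  rw [theta_eq, theta_eq, tan_arg_sub_arg (cpt_ne_zero g h) (cpt_ne_zero _ h')]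
  have hdet := det_eq g
  simp only [cpt, kap, fnormSq, Matrix.SpecialLinearGroup.coe_mul, Matrix.mul_apply,
    Fin.sum_univ_two]
  generalize (g.1 0 0) = a at *
  generalize (g.1 0 1) = b at *
  generalize (g.1 1 0) = c at *
  generalize (g.1 1 1) = d at *
  generalize (M.1 0 0) = x at *
  generalize (M.1 0 1) = y at *
  generalize (M.1 1 0) = z at *
  generalize (M.1 1 1) = t at *
  have hdet2 : (a * d - b * c) ^ 2 = 1 := by rw [hdet]; norm_num
  congr 1
  · linear_combination (2 * ((a ^ 2 + c ^ 2 - (b ^ 2 + d ^ 2)) * (x * z + y * t)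
      - (a * b + c * d) * (x ^ 2 + y ^ 2 - (z ^ 2 + t ^ 2)))) * hdet
  · linear_combination (-2 * (x ^ 2 + y ^ 2 + z ^ 2 + t ^ 2)) * hdet2

/-! ### Bounds for `τ` and `κ` -/

/-- `gMMᵀgᵀ ≥ λ_min(MMᵀ)·ggᵀ` and `λ_min(MMᵀ) ≥ 1/‖M‖²`. -/
lemma fnormSq_le_mul (g M : SL2R) : fnormSq g ≤ fnormSq M * fnormSq (g * M) := by
  have hdet := det_eq M
  simp only [fnormSq, Matrix.SpecialLinearGroup.coe_mul, Matrix.mul_apply, Fin.sum_univ_two]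
  generalize (g.1 0 0) = a at *
  generalize (g.1 0 1) = b at *
  generalize (g.1 1 0) = c at *
  generalize (g.1 1 1) = d at *
  generalize (M.1 0 0) = x at *
  generalize (M.1 0 1) = y at *
  generalize (M.1 1 0) = z at *
  generalize (M.1 1 1) = t at *
  -- `‖M‖²·‖rM‖² = ‖rMMᵀ‖² + ‖r‖²` for each row `r` of `g`
  have hdet2 : (x * t - y * z) ^ 2 = 1 := by rw [hdet]; norm_num
  have e : (x ^ 2 + y ^ 2 + z ^ 2 + t ^ 2) * ((a * x + b * z) ^ 2 + (a * y + b * t) ^ 2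
      + (c * x + d * z) ^ 2 + (c * y + d * t) ^ 2) - (a ^ 2 + b ^ 2 + c ^ 2 + d ^ 2)
      = (a * (x ^ 2 + y ^ 2) + b * (x * z + y * t)) ^ 2
        + (a * (x * z + y * t) + b * (z ^ 2 + t ^ 2)) ^ 2
        + (c * (x ^ 2 + y ^ 2) + d * (x * z + y * t)) ^ 2
        + (c * (x * z + y * t) + d * (z ^ 2 + t ^ 2)) ^ 2 := by
    linear_combination (a ^ 2 + b ^ 2 + c ^ 2 + d ^ 2) * hdet2
  nlinarith [sq_nonneg (a * (x ^ 2 + y ^ 2) + b * (x * z + y * t)),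
    sq_nonneg (a * (x * z + y * t) + b * (z ^ 2 + t ^ 2)),
    sq_nonneg (c * (x ^ 2 + y ^ 2) + d * (x * z + y * t)),
    sq_nonneg (c * (x * z + y * t) + d * (z ^ 2 + t ^ 2))]

lemma fnormSq_mul_le (g M : SL2R) : fnormSq (g * M) ≤ fnormSq M * fnormSq g := by
  simp only [fnormSq, Matrix.SpecialLinearGroup.coe_mul, Matrix.mul_apply, Fin.sum_univ_two]
  nlinarith [sq_nonneg (g.1 0 0 * M.1 1 0 - g.1 0 1 * M.1 0 0),
    sq_nonneg (g.1 0 0 * M.1 1 1 - g.1 0 1 * M.1 0 1),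
    sq_nonneg (g.1 1 0 * M.1 1 0 - g.1 1 1 * M.1 0 0),
    sq_nonneg (g.1 1 0 * M.1 1 1 - g.1 1 1 * M.1 0 1)]

lemma cauchy_four (a b c d x y z t : ℝ) :
    (a * x + b * y + c * z + d * t) ^ 2
      ≤ (a ^ 2 + b ^ 2 + c ^ 2 + d ^ 2) * (x ^ 2 + y ^ 2 + z ^ 2 + t ^ 2) := by
  nlinarith [sq_nonneg (a * y - b * x), sq_nonneg (a * z - c * x), sq_nonneg (a * t - d * x),
    sq_nonneg (b * z - c * y), sq_nonneg (b * t - d * y), sq_nonneg (c * t - d * z)]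

/-- `‖gMMᵀ‖² ≤ ‖M‖²·‖gM‖²`, with `gMMᵀ` written out in entries. -/
lemma row_sq_le (a b c d x y z t : ℝ) :
    (a * (x ^ 2 + y ^ 2) + b * (x * z + y * t)) ^ 2
        + (a * (x * z + y * t) + b * (z ^ 2 + t ^ 2)) ^ 2
        + (c * (x ^ 2 + y ^ 2) + d * (x * z + y * t)) ^ 2
        + (c * (x * z + y * t) + d * (z ^ 2 + t ^ 2)) ^ 2
      ≤ (x ^ 2 + y ^ 2 + z ^ 2 + t ^ 2) * ((a * x + b * z) ^ 2 + (a * y + b * t) ^ 2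
      + (c * x + d * z) ^ 2 + (c * y + d * t) ^ 2) := by
  have e : (x ^ 2 + y ^ 2 + z ^ 2 + t ^ 2) * ((a * x + b * z) ^ 2 + (a * y + b * t) ^ 2
      + (c * x + d * z) ^ 2 + (c * y + d * t) ^ 2)
      - (x * t - y * z) ^ 2 * (a ^ 2 + b ^ 2 + c ^ 2 + d ^ 2)
      = (a * (x ^ 2 + y ^ 2) + b * (x * z + y * t)) ^ 2
        + (a * (x * z + y * t) + b * (z ^ 2 + t ^ 2)) ^ 2
        + (c * (x ^ 2 + y ^ 2) + d * (x * z + y * t)) ^ 2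
        + (c * (x * z + y * t) + d * (z ^ 2 + t ^ 2)) ^ 2 := by ring
  have : 0 ≤ (x * t - y * z) ^ 2 * (a ^ 2 + b ^ 2 + c ^ 2 + d ^ 2) := by positivity
  linarith

/-- Summing `|r × MMᵀr| ≤ ‖r‖·‖MMᵀr‖` over the rows `r` of `g`. This gains a square root over the
trivial bound `‖g‖²‖M‖²` when `‖gM‖` is small. -/
lemma kap_sq_le (g M : SL2R) :
    kap g M ^ 2 ≤ fnormSq M * fnormSq g * fnormSq (g * M) := by
  simp only [kap, fnormSq, Matrix.SpecialLinearGroup.coe_mul, Matrix.mul_apply, Fin.sum_univ_two]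
  generalize (g.1 0 0) = a
  generalize (g.1 0 1) = b
  generalize (g.1 1 0) = c
  generalize (g.1 1 1) = d
  generalize (M.1 0 0) = x
  generalize (M.1 0 1) = y
  generalize (M.1 1 0) = z
  generalize (M.1 1 1) = t
  have h1 := cauchy_four a b c d
    (a * (x * z + y * t) + b * (z ^ 2 + t ^ 2))
    (-(a * (x ^ 2 + y ^ 2) + b * (x * z + y * t)))
    (c * (x * z + y * t) + d * (z ^ 2 + t ^ 2))
    (-(c * (x ^ 2 + y ^ 2) + d * (x * z + y * t)))
  have h2 := mul_le_mul_of_nonneg_left (row_sq_le a b c d x y z t)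
    (by positivity : 0 ≤ a ^ 2 + b ^ 2 + c ^ 2 + d ^ 2)
  refine le_trans (le_of_eq ?_) (h1.trans (le_trans (le_of_eq ?_) (h2.trans (le_of_eq ?_)))) <;>
    ring

/-! ### Perturbation on the left -/

/-- Stability of `κ` once the entries of `gᵀg` are controlled. -/
lemma kap_sub_le {P Q R u v w m B : ℝ} (hu : 0 ≤ u) (hw : 0 ≤ w) (hm : u + w = m)
    (hv : 2 * |v| ≤ m) (hPR : |P - R| ≤ 2 * B) (hQ : |Q| ≤ B) :
    |(P - R) * v - Q * (u - w)| ≤ 2 * B * m := by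
  have hB : 0 ≤ B := (abs_nonneg _).trans hQ
  have h1 : |(P - R) * v| ≤ 2 * B * |v| := by
    rw [abs_mul]; exact mul_le_mul_of_nonneg_right hPR (abs_nonneg _)
  have h2 : |Q * (u - w)| ≤ B * m := by
    rw [abs_mul]
    exact mul_le_mul hQ (abs_le.mpr ⟨by linarith, by linarith⟩) (abs_nonneg _) hB
  calc _ ≤ |(P - R) * v| + |Q * (u - w)| := abs_sub _ _
    _ ≤ _ := by nlinarith

/-- A bilinear form whose coefficients are at most `ε` in absolute value. -/
lemma form_le {E₁ E₂ E₃ ε a c b d : ℝ} (h₁ : |E₁| ≤ ε) (h₂ : |E₂| ≤ ε) (h₃ : |E₃| ≤ ε) :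
    |E₁ * (a * b) + E₂ * (a * d + c * b) + E₃ * (c * d)|
      ≤ ε * (a ^ 2 + b ^ 2 + c ^ 2 + d ^ 2) := by
  have hε : 0 ≤ ε := (abs_nonneg _).trans h₁
  have t1 : |E₁ * (a * b)| ≤ ε * (|a| * |b|) := by
    rw [abs_mul, abs_mul a b]; gcongr
  have t2 : |E₂ * (a * d + c * b)| ≤ ε * (|a| * |d| + |c| * |b|) := by
    rw [abs_mul]
    gcongr
    rw [← abs_mul, ← abs_mul]
    exact abs_add_le _ _
  have t3 : |E₃ * (c * d)| ≤ ε * (|c| * |d|) := by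
    rw [abs_mul, abs_mul c d]; gcongr
  have t4 := abs_add_le (E₁ * (a * b) + E₂ * (a * d + c * b)) (E₃ * (c * d))
  have t5 := abs_add_le (E₁ * (a * b)) (E₂ * (a * d + c * b))
  have t6 : |a| * |b| + (|a| * |d| + |c| * |b|) + |c| * |d| ≤ a ^ 2 + b ^ 2 + c ^ 2 + d ^ 2 := by
    rw [← sq_abs a, ← sq_abs b, ← sq_abs c, ← sq_abs d]
    nlinarith [sq_nonneg (|a| - |b|), sq_nonneg (|a| - |d|), sq_nonneg (|c| - |b|),
      sq_nonneg (|c| - |d|)]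
  have t7 := mul_le_mul_of_nonneg_left t6 hε
  linarith

lemma two_mul_abs_offdiag_le (M : SL2R) :
    2 * |M.1 0 0 * M.1 1 0 + M.1 0 1 * M.1 1 1| ≤ fnormSq M := by
  rw [← abs_two (α := ℝ), ← abs_mul]
  unfold fnormSq
  rw [abs_le]
  constructor <;> nlinarith [sq_nonneg (M.1 0 0 - M.1 1 0), sq_nonneg (M.1 0 1 - M.1 1 1),
    sq_nonneg (M.1 0 0 + M.1 1 0), sq_nonneg (M.1 0 1 + M.1 1 1)]

lemma left_norm {h : SL2R} {ε : ℝ} (h₁ : |h.1 0 0 ^ 2 + h.1 1 0 ^ 2 - 1| ≤ ε)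
    (h₂ : |h.1 0 0 * h.1 0 1 + h.1 1 0 * h.1 1 1| ≤ ε)
    (h₃ : |h.1 0 1 ^ 2 + h.1 1 1 ^ 2 - 1| ≤ ε) (g : SL2R) :
    |fnormSq (h * g) - fnormSq g| ≤ 2 * ε * fnormSq g := by
  have f1 := form_le (a := g.1 0 0) (c := g.1 1 0) (b := g.1 0 0) (d := g.1 1 0) h₁ h₂ h₃
  have f2 := form_le (a := g.1 0 1) (c := g.1 1 1) (b := g.1 0 1) (d := g.1 1 1) h₁ h₂ h₃
  have f3 := (abs_add_le _ _).trans (add_le_add f1 f2)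
  simp only [fnormSq, Matrix.SpecialLinearGroup.coe_mul, Matrix.mul_apply, Fin.sum_univ_two]
  exact (le_of_eq (by ring_nf)).trans (f3.trans (le_of_eq (by ring)))

lemma left_kap {h : SL2R} {ε : ℝ} (h₁ : |h.1 0 0 ^ 2 + h.1 1 0 ^ 2 - 1| ≤ ε)
    (h₂ : |h.1 0 0 * h.1 0 1 + h.1 1 0 * h.1 1 1| ≤ ε)
    (h₃ : |h.1 0 1 ^ 2 + h.1 1 1 ^ 2 - 1| ≤ ε) (g M : SL2R) :
    |kap (h * g) M - kap g M| ≤ 2 * ε * fnormSq g * fnormSq M := by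
  have f1 := form_le (a := g.1 0 0) (c := g.1 1 0) (b := g.1 0 0) (d := g.1 1 0) h₁ h₂ h₃
  have f2 := form_le (a := g.1 0 1) (c := g.1 1 1) (b := g.1 0 1) (d := g.1 1 1) h₁ h₂ h₃
  have f3 := (abs_sub _ _).trans (add_le_add f1 f2)
  have f4 := form_le (a := g.1 0 0) (c := g.1 1 0) (b := g.1 0 1) (d := g.1 1 1) h₁ h₂ h₃
  have := kap_sub_le (u := M.1 0 0 ^ 2 + M.1 0 1 ^ 2) (w := M.1 1 0 ^ 2 + M.1 1 1 ^ 2)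
    (m := fnormSq M) (B := ε * fnormSq g) (by positivity) (by positivity)
    (by unfold fnormSq; ring) (two_mul_abs_offdiag_le M) (f3.trans (le_of_eq (by unfold fnormSq; ring)))
    (f4.trans (le_of_eq (by unfold fnormSq; ring)))
  simp only [kap, Matrix.SpecialLinearGroup.coe_mul, Matrix.mul_apply, Fin.sum_univ_two]
  exact (le_of_eq (by ring_nf)).trans (this.trans (le_of_eq (by simp only [fnormSq]; ring)))

/-! ### Perturbation on the right -/

lemma sq_comb_le {a b e₁ e₂ ε : ℝ} (h₁ : |e₁| ≤ ε) (h₂ : |e₂| ≤ ε) :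
    (a * e₁ + b * e₂) ^ 2 ≤ 2 * ε ^ 2 * (a ^ 2 + b ^ 2) := by
  have hε : 0 ≤ ε := (abs_nonneg _).trans h₁
  have k₁ : e₁ ^ 2 ≤ ε ^ 2 := sq_le_sq' (abs_le.mp h₁).1 (abs_le.mp h₁).2
  have k₂ : e₂ ^ 2 ≤ ε ^ 2 := sq_le_sq' (abs_le.mp h₂).1 (abs_le.mp h₂).2
  nlinarith [sq_nonneg (a * e₁ - b * e₂), mul_le_mul_of_nonneg_left k₁ (sq_nonneg a),
    mul_le_mul_of_nonneg_left k₂ (sq_nonneg b)]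

/-- The entrywise form of `gh = g + F` with `‖F‖² ≤ 4ε²‖g‖²`, when `h` is entrywise `ε`-close to
the identity. -/
lemma exists_right {h : SL2R} {ε : ℝ} (h₁ : |h.1 0 0 - 1| ≤ ε) (h₂ : |h.1 0 1| ≤ ε)
    (h₃ : |h.1 1 0| ≤ ε) (h₄ : |h.1 1 1 - 1| ≤ ε) (g : SL2R) :
    ∃ f₁ f₂ f₃ f₄ : ℝ, (g * h).1 0 0 = g.1 0 0 + f₁ ∧ (g * h).1 0 1 = g.1 0 1 + f₂ ∧
      (g * h).1 1 0 = g.1 1 0 + f₃ ∧ (g * h).1 1 1 = g.1 1 1 + f₄ ∧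
      f₁ ^ 2 + f₂ ^ 2 + f₃ ^ 2 + f₄ ^ 2 ≤ 4 * ε ^ 2 * fnormSq g := by
  refine ⟨g.1 0 0 * (h.1 0 0 - 1) + g.1 0 1 * h.1 1 0,
    g.1 0 0 * h.1 0 1 + g.1 0 1 * (h.1 1 1 - 1),
    g.1 1 0 * (h.1 0 0 - 1) + g.1 1 1 * h.1 1 0,
    g.1 1 0 * h.1 0 1 + g.1 1 1 * (h.1 1 1 - 1), ?_, ?_, ?_, ?_, ?_⟩
  iterate 4
    · simp only [Matrix.SpecialLinearGroup.coe_mul, Matrix.mul_apply, Fin.sum_univ_two]; ring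
  have k₁ := sq_comb_le (a := g.1 0 0) (b := g.1 0 1) h₁ h₃
  have k₂ := sq_comb_le (a := g.1 0 0) (b := g.1 0 1) h₂ h₄
  have k₃ := sq_comb_le (a := g.1 1 0) (b := g.1 1 1) h₁ h₃
  have k₄ := sq_comb_le (a := g.1 1 0) (b := g.1 1 1) h₂ h₄
  simp only [fnormSq]
  linarith

/-- Writing `gh = g + F`, the difference is `2⟨F, gMMᵀ⟩ + ‖FM‖²`, and
`‖gMMᵀ‖² ≤ ‖M‖²‖gM‖²`. -/
lemma right_norm {h : SL2R} {ε ρ : ℝ} (h₁ : |h.1 0 0 - 1| ≤ ε) (h₂ : |h.1 0 1| ≤ ε)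
    (h₃ : |h.1 1 0| ≤ ε) (h₄ : |h.1 1 1 - 1| ≤ ε) (g M : SL2R) (hρ : 0 ≤ ρ)
    (hρ2 : ρ ^ 2 = fnormSq M * fnormSq g * fnormSq (g * M)) :
    |fnormSq (g * h * M) - fnormSq (g * M)|
      ≤ 4 * ε * ρ + 4 * ε ^ 2 * (fnormSq M * fnormSq g) := by
  have hε : 0 ≤ ε := (abs_nonneg _).trans h₁
  obtain ⟨f₁, f₂, f₃, f₄, e₁, e₂, e₃, e₄, hF⟩ := exists_right h₁ h₂ h₃ h₄ g
  have hG : fnormSq g = g.1 0 0 ^ 2 + g.1 0 1 ^ 2 + g.1 1 0 ^ 2 + g.1 1 1 ^ 2 := rfl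
  have hM : fnormSq M = M.1 0 0 ^ 2 + M.1 0 1 ^ 2 + M.1 1 0 ^ 2 + M.1 1 1 ^ 2 := rfl
  have hm : 0 ≤ fnormSq M := by rw [hM]; positivity
  have ht : fnormSq (g * M) = (g.1 0 0 * M.1 0 0 + g.1 0 1 * M.1 1 0) ^ 2
      + (g.1 0 0 * M.1 0 1 + g.1 0 1 * M.1 1 1) ^ 2
      + (g.1 1 0 * M.1 0 0 + g.1 1 1 * M.1 1 0) ^ 2
      + (g.1 1 0 * M.1 0 1 + g.1 1 1 * M.1 1 1) ^ 2 := by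
    simp only [fnormSq, Matrix.SpecialLinearGroup.coe_mul, Matrix.mul_apply, Fin.sum_univ_two]
  have ht' : fnormSq (g * h * M)
      = ((g.1 0 0 + f₁) * M.1 0 0 + (g.1 0 1 + f₂) * M.1 1 0) ^ 2
      + ((g.1 0 0 + f₁) * M.1 0 1 + (g.1 0 1 + f₂) * M.1 1 1) ^ 2
      + ((g.1 1 0 + f₃) * M.1 0 0 + (g.1 1 1 + f₄) * M.1 1 0) ^ 2
      + ((g.1 1 0 + f₃) * M.1 0 1 + (g.1 1 1 + f₄) * M.1 1 1) ^ 2 := by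
    rw [← e₁, ← e₂, ← e₃, ← e₄]
    simp only [fnormSq, Matrix.SpecialLinearGroup.coe_mul (g * h) M, Matrix.mul_apply,
      Fin.sum_univ_two]
  generalize fnormSq (g * h * M) = τ' at *
  generalize fnormSq (g * M) = τ at *
  generalize fnormSq g = G at *
  generalize fnormSq M = m at *
  generalize (g.1 0 0) = a at *
  generalize (g.1 0 1) = b at *
  generalize (g.1 1 0) = c at *
  generalize (g.1 1 1) = d at *
  generalize (M.1 0 0) = x at *
  generalize (M.1 0 1) = y at *
  generalize (M.1 1 0) = z at *
  generalize (M.1 1 1) = t at *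
  have hn := row_sq_le a b c d x y z t
  rw [← ht, ← hM] at hn
  have hlin : |f₁ * (a * (x ^ 2 + y ^ 2) + b * (x * z + y * t))
      + f₂ * (a * (x * z + y * t) + b * (z ^ 2 + t ^ 2))
      + f₃ * (c * (x ^ 2 + y ^ 2) + d * (x * z + y * t))
      + f₄ * (c * (x * z + y * t) + d * (z ^ 2 + t ^ 2))| ≤ 2 * ε * ρ := by
    refine abs_le_of_sq_le_sq ((cauchy_four _ _ _ _ _ _ _ _).trans ?_) (by positivity)
    refine (mul_le_mul hF hn (by positivity) ?_).trans (le_of_eq ?_)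
    · rw [hG]; positivity
    · rw [mul_pow, hρ2]; ring
  have hquad : (f₁ * x + f₂ * z) ^ 2 + (f₁ * y + f₂ * t) ^ 2 + (f₃ * x + f₄ * z) ^ 2
      + (f₃ * y + f₄ * t) ^ 2 ≤ 4 * ε ^ 2 * (m * G) := by
    have hid : (f₁ * x + f₂ * z) ^ 2 + (f₁ * y + f₂ * t) ^ 2 + (f₃ * x + f₄ * z) ^ 2
        + (f₃ * y + f₄ * t) ^ 2 + ((f₁ * z - f₂ * x) ^ 2 + (f₁ * t - f₂ * y) ^ 2
        + (f₃ * z - f₄ * x) ^ 2 + (f₃ * t - f₄ * y) ^ 2)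
        = m * (f₁ ^ 2 + f₂ ^ 2 + f₃ ^ 2 + f₄ ^ 2) := by
      rw [hM]; ring
    have hle := mul_le_mul_of_nonneg_left hF hm
    linarith [sq_nonneg (f₁ * z - f₂ * x), sq_nonneg (f₁ * t - f₂ * y),
      sq_nonneg (f₃ * z - f₄ * x), sq_nonneg (f₃ * t - f₄ * y)]
  have hquad0 : 0 ≤ (f₁ * x + f₂ * z) ^ 2 + (f₁ * y + f₂ * t) ^ 2 + (f₃ * x + f₄ * z) ^ 2
      + (f₃ * y + f₄ * t) ^ 2 := by positivity
  have key : τ' - τ = 2 * (f₁ * (a * (x ^ 2 + y ^ 2) + b * (x * z + y * t))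
      + f₂ * (a * (x * z + y * t) + b * (z ^ 2 + t ^ 2))
      + f₃ * (c * (x ^ 2 + y ^ 2) + d * (x * z + y * t))
      + f₄ * (c * (x * z + y * t) + d * (z ^ 2 + t ^ 2)))
      + ((f₁ * x + f₂ * z) ^ 2 + (f₁ * y + f₂ * t) ^ 2 + (f₃ * x + f₄ * z) ^ 2
      + (f₃ * y + f₄ * t) ^ 2) := by
    rw [ht, ht']; ring
  rw [key]
  have hl := abs_le.mp hlin
  rw [abs_le]
  constructor <;> linarith

/-- `⟨g, F⟩` up to permuting and changing signs of entries. -/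
lemma abs_dot_le {a b c d x y z t ε G : ℝ} (hε : 0 ≤ ε)
    (hG : a ^ 2 + b ^ 2 + c ^ 2 + d ^ 2 = G)
    (hF : x ^ 2 + y ^ 2 + z ^ 2 + t ^ 2 ≤ 4 * ε ^ 2 * G) :
    |a * x + b * y + c * z + d * t| ≤ 2 * ε * G := by
  have hG0 : 0 ≤ G := by rw [← hG]; positivity
  refine abs_le_of_sq_le_sq ((cauchy_four _ _ _ _ _ _ _ _).trans ?_) (by positivity)
  rw [hG]
  nlinarith [mul_le_mul_of_nonneg_left hF hG0]

lemma right_self {h : SL2R} {ε : ℝ} (h₁ : |h.1 0 0 - 1| ≤ ε) (h₂ : |h.1 0 1| ≤ ε)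
    (h₃ : |h.1 1 0| ≤ ε) (h₄ : |h.1 1 1 - 1| ≤ ε) (hε1 : ε ≤ 1) (g : SL2R) :
    |fnormSq (g * h) - fnormSq g| ≤ 8 * ε * fnormSq g := by
  have hε : 0 ≤ ε := (abs_nonneg _).trans h₁
  obtain ⟨f₁, f₂, f₃, f₄, e₁, e₂, e₃, e₄, hF⟩ := exists_right h₁ h₂ h₃ h₄ g
  have hG : g.1 0 0 ^ 2 + g.1 0 1 ^ 2 + g.1 1 0 ^ 2 + g.1 1 1 ^ 2 = fnormSq g := rfl
  have hG0 : 0 ≤ fnormSq g := by rw [← hG]; positivity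
  have hl := abs_le.mp (abs_dot_le hε hG hF)
  have hεε : ε ^ 2 * fnormSq g ≤ ε * fnormSq g := by gcongr; nlinarith
  have h0 : 0 ≤ f₁ ^ 2 + f₂ ^ 2 + f₃ ^ 2 + f₄ ^ 2 := by positivity
  have key : fnormSq (g * h) - fnormSq g = 2 * (g.1 0 0 * f₁ + g.1 0 1 * f₂ + g.1 1 0 * f₃
      + g.1 1 1 * f₄) + (f₁ ^ 2 + f₂ ^ 2 + f₃ ^ 2 + f₄ ^ 2) := by
    rw [fnormSq, e₁, e₂, e₃, e₄, ← hG]; ring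
  rw [key, abs_le]
  constructor <;> nlinarith

lemma right_kap {h : SL2R} {ε : ℝ} (h₁ : |h.1 0 0 - 1| ≤ ε) (h₂ : |h.1 0 1| ≤ ε)
    (h₃ : |h.1 1 0| ≤ ε) (h₄ : |h.1 1 1 - 1| ≤ ε) (hε1 : ε ≤ 1) (g M : SL2R) :
    |kap (g * h) M - kap g M| ≤ 8 * ε * fnormSq g * fnormSq M := by
  have hε : 0 ≤ ε := (abs_nonneg _).trans h₁
  obtain ⟨f₁, f₂, f₃, f₄, e₁, e₂, e₃, e₄, hF⟩ := exists_right h₁ h₂ h₃ h₄ g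
  have hG : g.1 0 0 ^ 2 + g.1 0 1 ^ 2 + g.1 1 0 ^ 2 + g.1 1 1 ^ 2 = fnormSq g := rfl
  have hG0 : 0 ≤ fnormSq g := by rw [← hG]; positivity
  have hεε : ε ^ 2 * fnormSq g ≤ ε * fnormSq g := by gcongr; nlinarith
  have l₁ := abs_le.mp (abs_dot_le (x := f₁) (y := -f₂) (z := f₃) (t := -f₄) hε hG
    (by simpa using hF))
  have l₂ := abs_le.mp (abs_dot_le (x := f₂) (y := f₁) (z := f₄) (t := f₃) hε hG
    (by linarith))
  have := kap_sub_le (u := M.1 0 0 ^ 2 + M.1 0 1 ^ 2) (w := M.1 1 0 ^ 2 + M.1 1 1 ^ 2)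
    (v := M.1 0 0 * M.1 1 0 + M.1 0 1 * M.1 1 1)
    (P := (g.1 0 0 + f₁) ^ 2 + (g.1 1 0 + f₃) ^ 2 - (g.1 0 0 ^ 2 + g.1 1 0 ^ 2))
    (R := (g.1 0 1 + f₂) ^ 2 + (g.1 1 1 + f₄) ^ 2 - (g.1 0 1 ^ 2 + g.1 1 1 ^ 2))
    (Q := (g.1 0 0 + f₁) * (g.1 0 1 + f₂) + (g.1 1 0 + f₃) * (g.1 1 1 + f₄)
      - (g.1 0 0 * g.1 0 1 + g.1 1 0 * g.1 1 1))
    (m := fnormSq M) (B := 4 * ε * fnormSq g) (by positivity) (by positivity)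
    (by unfold fnormSq; ring) (two_mul_abs_offdiag_le M)
    (by
      rw [abs_le]
      constructor <;> nlinarith [sq_nonneg f₁, sq_nonneg f₂, sq_nonneg f₃, sq_nonneg f₄])
    (by
      rw [abs_le]
      constructor <;> nlinarith [sq_nonneg (f₁ - f₂), sq_nonneg (f₁ + f₂), sq_nonneg (f₃ - f₄),
        sq_nonneg (f₃ + f₄)])
  rw [kap, kap, e₁, e₂, e₃, e₄]
  exact (le_of_eq (by ring_nf)).trans (this.trans (le_of_eq (by ring)))

/-! ### The perturbing matrices are close to orthogonal and to the identity -/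

/-- `‖h‖² ≤ 2 cosh δ` forces `hᵀh` to be close to the identity: its entries satisfy
`(H₁₁ − H₂₂)² + 4H₁₂² = (tr H)² − 4 ≤ (2 sinh δ)²`. -/
lemma left_close {h : SL2R} {δ : ℝ} (hδ : 0 < δ) (hδ1 : δ ≤ 1 / 2)
    (hh : fnormSq h ≤ 2 * Real.cosh δ) :
    |h.1 0 0 ^ 2 + h.1 1 0 ^ 2 - 1| ≤ 2 * δ ∧
    |h.1 0 0 * h.1 0 1 + h.1 1 0 * h.1 1 1| ≤ 2 * δ ∧
    |h.1 0 1 ^ 2 + h.1 1 1 ^ 2 - 1| ≤ 2 * δ := by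
  have h2 := two_le_fnormSq h
  have hdet := det_eq h
  have hexp : Real.exp δ - 1 ≤ 2 * δ := by
    have := Real.abs_exp_sub_one_le (x := δ) (by rw [abs_of_pos hδ]; linarith)
    rw [abs_of_pos hδ] at this
    exact (le_abs_self _).trans this
  have hcs : Real.cosh δ + Real.sinh δ = Real.exp δ := Real.cosh_add_sinh δ
  have hc1 := Real.one_le_cosh δ
  have hs0 : 0 < Real.sinh δ := Real.sinh_pos_iff.mpr hδ
  have hsq := Real.cosh_sq δ
  have hG : fnormSq h = h.1 0 0 ^ 2 + h.1 0 1 ^ 2 + h.1 1 0 ^ 2 + h.1 1 1 ^ 2 := rfl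
  generalize fnormSq h = G at *
  generalize (h.1 0 0) = a at *
  generalize (h.1 0 1) = b at *
  generalize (h.1 1 0) = c at *
  generalize (h.1 1 1) = d at *
  have hid : (a ^ 2 + c ^ 2 - (b ^ 2 + d ^ 2)) ^ 2 + (2 * (a * b + c * d)) ^ 2 = G ^ 2 - 4 := by
    rw [hG]; linear_combination (-4 * (a * d - b * c) - 4) * hdet
  have hG4 : G ^ 2 - 4 ≤ (2 * Real.sinh δ) ^ 2 := by nlinarith
  have k₁ : |a ^ 2 + c ^ 2 - (b ^ 2 + d ^ 2)| ≤ 2 * Real.sinh δ :=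
    abs_le_of_sq_le_sq (by nlinarith [sq_nonneg (2 * (a * b + c * d))]) (by positivity)
  have k₂ : |2 * (a * b + c * d)| ≤ 2 * Real.sinh δ :=
    abs_le_of_sq_le_sq (by nlinarith [sq_nonneg (a ^ 2 + c ^ 2 - (b ^ 2 + d ^ 2))])
      (by positivity)
  rw [abs_le] at k₁ k₂
  refine ⟨abs_le.mpr ⟨?_, ?_⟩, abs_le.mpr ⟨?_, ?_⟩, abs_le.mpr ⟨?_, ?_⟩⟩ <;> linarith

lemma right_close {α s β δ : ℝ} (hδ1 : δ ≤ 1 / 100) (hα : |α| < δ) (hs : |s| < δ)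
    (hβ : |β| < δ) :
    |(kMat α * aMat s * kMat β).1 0 0 - 1| ≤ 4 * δ ∧ |(kMat α * aMat s * kMat β).1 0 1| ≤ 4 * δ ∧
    |(kMat α * aMat s * kMat β).1 1 0| ≤ 4 * δ ∧
    |(kMat α * aMat s * kMat β).1 1 1 - 1| ≤ 4 * δ := by
  have hδ : 0 < δ := (abs_nonneg _).trans_lt hα
  have hsin : ∀ φ : ℝ, |φ| < δ → |Real.sin (φ / 2)| ≤ δ / 2 := fun φ h => by
    refine Real.abs_sin_le_abs.trans ?_
    rw [abs_div, abs_two]; linarith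
  have hcos : ∀ φ : ℝ, |φ| < δ → 1 - δ / 8 ≤ Real.cos (φ / 2) := fun φ h => by
    have h1 := Real.one_sub_sq_div_two_le_cos (x := φ / 2)
    have h2 : φ ^ 2 ≤ δ ^ 2 := sq_le_sq' (abs_lt.mp h).1.le (abs_lt.mp h).2.le
    nlinarith
  have hexp : ∀ r : ℝ, |r| < δ → |Real.exp (r / 2) - 1| ≤ δ := fun r h => by
    have := Real.abs_exp_sub_one_le (x := r / 2) (by rw [abs_div, abs_two]; linarith)
    rw [abs_div, abs_two] at this
    linarith
  have sa := abs_le.mp (hsin α hα)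
  have sb := abs_le.mp (hsin β hβ)
  have ca := hcos α hα
  have cb := hcos β hβ
  have ca1 := Real.cos_le_one (α / 2)
  have cb1 := Real.cos_le_one (β / 2)
  have e₁ := abs_le.mp (hexp s hs)
  have e₂ := abs_le.mp (hexp (-s) (by rwa [abs_neg]))
  simp only [Matrix.SpecialLinearGroup.coe_mul, Matrix.mul_apply, Fin.sum_univ_two]
  simp only [kMat, aMat, Matrix.of_apply, Matrix.cons_val_zero, Matrix.cons_val_one, Matrix.cons_val',
    Matrix.cons_val_fin_one, mul_zero, zero_add, add_zero]
  generalize Real.sin (α / 2) = p at *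
  generalize Real.sin (β / 2) = q at *
  generalize Real.cos (α / 2) = u at *
  generalize Real.cos (β / 2) = v at *
  generalize Real.exp (s / 2) = x at *
  generalize Real.exp (-s / 2) = y at *
  -- the diagonal entries are `1 + O(δ)`, the off-diagonal ones are `O(δ)`
  have hu0 : 0 ≤ u := by linarith
  have hv0 : 0 ≤ v := by linarith
  have big : ∀ w : ℝ, |w - 1| ≤ δ → |u * w * v - 1| ≤ 2 * δ := fun w hw => by
    rw [abs_le] at hw
    have hw0 : 0 ≤ w := by linarith
    have h1 : u * w ≤ w := mul_le_of_le_one_left hw0 ca1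
    have h2 : u * w * v ≤ u * w := mul_le_of_le_one_right (by positivity) cb1
    have h3 : (1 - δ / 8) * (1 - δ) ≤ u * w := mul_le_mul ca (by linarith) (by linarith) hu0
    have h4 : (1 - δ / 8) * (1 - δ) * (1 - δ / 8) ≤ u * w * v :=
      mul_le_mul h3 cb (by linarith) (by positivity)
    rw [abs_le]
    constructor <;> nlinarith
  have one : ∀ r k w : ℝ, |r| ≤ δ / 2 → 0 ≤ k → k ≤ 1 → |w - 1| ≤ δ → |r * w * k| ≤ δ :=
    fun r k w hr hk hk1 hw => by
      rw [abs_le] at hw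
      rw [abs_mul, abs_mul, abs_of_nonneg hk, abs_of_nonneg (by linarith : 0 ≤ w)]
      calc |r| * w * k ≤ δ / 2 * 2 * 1 := by
            gcongr; all_goals linarith
        _ = δ := by ring
  have hx := abs_le.mpr e₁
  have hy := abs_le.mpr e₂
  have hp := abs_le.mpr sa
  have hq := abs_le.mpr sb
  have hq1 : |q| ≤ 1 := by linarith
  have b₁ := abs_le.mp (big x hx)
  have b₂ := abs_le.mp (big y hy)
  have o₁ := abs_le.mp (one p v x hp hv0 cb1 hx)
  have o₂ := abs_le.mp (one p v y hp hv0 cb1 hy)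
  have o₃ := abs_le.mp (one q u x hq hu0 ca1 hx)
  have o₄ := abs_le.mp (one q u y hq hu0 ca1 hy)
  have hpq : ∀ w : ℝ, |w - 1| ≤ δ → |p * w * q| ≤ δ := fun w hw => by
    have := one p |q| w hp (abs_nonneg _) hq1 hw
    rwa [abs_mul, abs_abs, ← abs_mul] at this
  have z₁ := abs_le.mp (hpq x hx)
  have z₂ := abs_le.mp (hpq y hy)
  refine ⟨abs_le.mpr ⟨?_, ?_⟩, abs_le.mpr ⟨?_, ?_⟩, abs_le.mpr ⟨?_, ?_⟩, abs_le.mpr ⟨?_, ?_⟩⟩ <;>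
    linarith

/-! ### Stability of the quotient -/

/-- The stability estimate for `2κ/(Gτ − 2m)`, where `ρ = √(mGτ)`. Since `G ≤ mτ` makes
`Gτ − 2m` comparable to `Gτ`, both error terms are `O(e·m/τ) = O(e·m²/G)`. -/
lemma quotient_le {G m τ κ G₁ τ₁ κ₁ ρ e : ℝ} (hm : 2 ≤ m) (hG : 100 * m ≤ G)
    (hτ : G ≤ m * τ) (hτm : τ ≤ m * G) (hρ : 0 ≤ ρ) (hρ2 : ρ ^ 2 = m * G * τ)
    (hκ : |κ| ≤ ρ) (he : 0 < e) (hem : e * m ≤ 1 / 10)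
    (hG₁ : |G₁ - G| ≤ e * G) (hτ₁ : |τ₁ - τ| ≤ e * ρ) (hκ₁ : |κ₁ - κ| ≤ e * (G * m)) :
    |2 * κ₁ / (G₁ * τ₁ - 2 * m) - 2 * κ / (G * τ - 2 * m)| ≤ 28 * e * m ^ 2 / G := by
  have hm0 : 0 < m := by linarith
  have hG0 : 0 < G := by linarith
  have hτ100 : 100 ≤ τ := by
    by_contra! h
    nlinarith
  have hτ0 : 0 < τ := by linarith
  have hρτ : ρ ≤ m * τ := abs_le_of_sq_le_sq' (by nlinarith [mul_pos hm0 hτ0]) (by positivity) |>.2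
  have hτρ : τ ≤ ρ := abs_le_of_sq_le_sq' (by nlinarith) hρ |>.2
  have heρ : e * ρ ≤ τ / 10 := by nlinarith
  have he1 : e ≤ 1 / 20 := by nlinarith
  have hτ₁' := abs_le.mp hτ₁
  have hG₁' := abs_le.mp hG₁
  have hτa : 9 / 10 * τ ≤ τ₁ := by linarith
  have hτb : τ₁ ≤ 11 / 10 * τ := by linarith
  have hGa : 19 / 20 * G ≤ G₁ := by nlinarith
  have hGτ : 10000 * m ≤ G * τ := by nlinarith
  have hR : G * τ / 2 ≤ G * τ - 2 * m := by linarith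
  have hR₁ : G * τ / 2 ≤ G₁ * τ₁ - 2 * m := by
    have : (19 / 20 * G) * (9 / 10 * τ) ≤ G₁ * τ₁ :=
      mul_le_mul hGa hτa (by positivity) (by linarith)
    linarith
  have hGτ0 : 0 < G * τ / 2 := by positivity
  have hdiff : |(G₁ * τ₁ - 2 * m) - (G * τ - 2 * m)| ≤ 3 * e * G * ρ := by
    have : (G₁ * τ₁ - 2 * m) - (G * τ - 2 * m) = (G₁ - G) * τ₁ + G * (τ₁ - τ) := by ring
    rw [this]
    have k₁ : |(G₁ - G) * τ₁| ≤ e * G * (11 / 10 * ρ) := by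
      rw [abs_mul, abs_of_nonneg (by linarith : 0 ≤ τ₁)]
      exact mul_le_mul hG₁ (by linarith) (by linarith) (by positivity)
    have k₂ : |G * (τ₁ - τ)| ≤ G * (e * ρ) := by
      rw [abs_mul, abs_of_pos hG0]
      exact mul_le_mul_of_nonneg_left hτ₁ hG0.le
    have k₃ : 0 ≤ e * G * ρ := by positivity
    linarith [abs_add_le ((G₁ - G) * τ₁) (G * (τ₁ - τ))]
  generalize hRd : G * τ - 2 * m = R at *
  generalize hRd₁ : G₁ * τ₁ - 2 * m = R₁ at *
  have hR0 : 0 < R := by linarith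
  have hR₁0 : 0 < R₁ := by linarith
  have hsplit : 2 * κ₁ / R₁ - 2 * κ / R = 2 * (κ₁ - κ) / R₁ - 2 * κ * (R₁ - R) / (R * R₁) := by
    field_simp
    ring
  have t₁ : |2 * (κ₁ - κ) / R₁| ≤ 4 * e * (m / τ) := by
    rw [abs_div, abs_mul, abs_two, abs_of_pos hR₁0]
    calc 2 * |κ₁ - κ| / R₁ ≤ 2 * (e * (G * m)) / (G * τ / 2) := by gcongr
      _ = 4 * e * (m / τ) := by field_simp; ring
  have t₂ : |2 * κ * (R₁ - R) / (R * R₁)| ≤ 24 * e * (m / τ) := by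
    rw [abs_div, abs_mul, abs_mul, abs_two, abs_of_pos (mul_pos hR0 hR₁0)]
    calc 2 * |κ| * |R₁ - R| / (R * R₁)
        ≤ 2 * ρ * (3 * e * G * ρ) / (G * τ / 2 * (G * τ / 2)) := by gcongr
      _ = 24 * e * ρ ^ 2 / (G * τ ^ 2) := by field_simp; ring
      _ = 24 * e * (m / τ) := by rw [hρ2]; field_simp
  have hmτ : m / τ ≤ m ^ 2 / G := by
    rw [div_le_div_iff₀ hτ0 hG0]
    nlinarith
  calc |2 * κ₁ / R₁ - 2 * κ / R| ≤ 4 * e * (m / τ) + 24 * e * (m / τ) := by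
        rw [hsplit]
        exact (abs_sub _ _).trans (add_le_add t₁ t₂)
    _ = 28 * e * (m / τ) := by ring
    _ ≤ 28 * e * (m ^ 2 / G) := by gcongr
    _ = 28 * e * m ^ 2 / G := by ring

/-- Combines the perturbation by `h₁` (from `G, τ, κ` to `G', τ', κ'`) with the one by `h₂` (from
`G', τ', κ'` to `G₁, τ₁, κ₁`). -/
lemma combine {G m τ κ G' τ' κ' G₁ τ₁ κ₁ ρ δ : ℝ} (hm : 2 ≤ m) (hG : 100 * m ≤ G)
    (hτG : G ≤ m * τ) (hτm : τ ≤ m * G) (hρ : 0 ≤ ρ) (hρ2 : ρ ^ 2 = m * G * τ)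
    (hτ0 : 0 < τ) (hτ' : 2 ≤ τ')
    (hδ : 0 < δ) (hδm : δ * m < 1 / 1000) (hδ1 : δ < 1 / 2000)
    (lG : |G' - G| ≤ 2 * (2 * δ) * G) (lτ : |τ' - τ| ≤ 2 * (2 * δ) * τ)
    (lκ : |κ' - κ| ≤ 2 * (2 * δ) * G * m)
    (rG : |G₁ - G'| ≤ 8 * (4 * δ) * G')
    (rτ : |τ₁ - τ'| ≤ 4 * (4 * δ) * √(m * G' * τ') + 4 * (4 * δ) ^ 2 * (m * G'))
    (rκ : |κ₁ - κ'| ≤ 8 * (4 * δ) * G' * m) :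
    |G₁ - G| ≤ 100 * δ * G ∧ |τ₁ - τ| ≤ 100 * δ * ρ ∧ |κ₁ - κ| ≤ 100 * δ * (G * m) ∧
      ρ ≤ m * G ∧ 2 < G₁ ∧ 2 < τ₁ := by
  have hm0 : 0 < m := by linarith
  have hG0 : 0 < G := by linarith
  have hGρ : G ≤ ρ := (abs_le_of_sq_le_sq' (by nlinarith only [hρ2, hτG, hG0]) hρ).2
  have hτρ : τ ≤ ρ := (abs_le_of_sq_le_sq' (by nlinarith only [hρ2, hτm, hτ0]) hρ).2
  have hρmG : ρ ≤ m * G :=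
    (abs_le_of_sq_le_sq' (by nlinarith only [hρ2, hτm, mul_pos hm0 hG0]) (by positivity)).2
  have hρmτ : ρ ≤ m * τ :=
    (abs_le_of_sq_le_sq' (by nlinarith only [hρ2, hτG, mul_pos hm0 hτ0]) (by positivity)).2
  have hG'2 : G' ≤ 2 * G := by
    have := mul_le_mul_of_nonneg_right hδ1.le hG0.le
    linarith [(abs_le.mp lG).2]
  have hτ'2 : τ' ≤ 2 * τ := by
    have := mul_le_mul_of_nonneg_right hδ1.le hτ0.le
    linarith [(abs_le.mp lτ).2]
  have hρ' : √(m * G' * τ') ≤ 2 * ρ := by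
    rw [Real.sqrt_le_left (by positivity), mul_pow, hρ2]
    calc m * G' * τ' ≤ m * (2 * G) * (2 * τ) := by gcongr
      _ = 2 ^ 2 * (m * G * τ) := by ring
  have dG : |G₁ - G| ≤ 100 * δ * G := by
    have h1 := abs_sub_le G₁ G' G
    have h2 := mul_le_mul_of_nonneg_left hG'2 hδ.le
    have h3 := mul_pos hδ hG0
    linarith
  have dκ : |κ₁ - κ| ≤ 100 * δ * (G * m) := by
    have h1 := abs_sub_le κ₁ κ' κ
    have h2 := mul_le_mul_of_nonneg_right (mul_le_mul_of_nonneg_left hG'2 hδ.le) hm0.le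
    have h3 := mul_pos (mul_pos hδ hG0) hm0
    linarith
  have dτ : |τ₁ - τ| ≤ 100 * δ * ρ := by
    have h1 := abs_sub_le τ₁ τ' τ
    have h2 := mul_le_mul_of_nonneg_left hρ' hδ.le
    have h3 := mul_le_mul_of_nonneg_left hτρ hδ.le
    -- the quadratic term is absorbed because `δm` is small and `G ≤ ρ`
    have h4 : δ ^ 2 * (m * G') ≤ δ * ρ := by
      calc δ ^ 2 * (m * G') ≤ δ ^ 2 * (m * (2 * ρ)) := by gcongr; linarith
        _ = (δ * m) * (2 * (δ * ρ)) := by ring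
        _ ≤ 1 / 2 * (2 * (δ * ρ)) := by gcongr; linarith
        _ = δ * ρ := by ring
    linarith [mul_nonneg hδ.le hρ]
  refine ⟨dG, dτ, dκ, hρmG, ?_, ?_⟩
  · have := mul_le_mul_of_nonneg_right hδ1.le hG0.le
    linarith [(abs_le.mp dG).1]
  · have hτ100 : 100 ≤ τ := by
      by_contra! h
      linarith [mul_lt_mul_of_pos_left h hm0]
    have : δ * ρ ≤ 1 / 1000 * τ := by
      calc δ * ρ ≤ δ * (m * τ) := by gcongr
        _ = δ * m * τ := by ring
        _ ≤ 1 / 1000 * τ := by gcongr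
    linarith [(abs_le.mp dτ).1]

/-- Lemma 2.7: simultaneous two-sided perturbation estimates for
`‖gM‖²` and `tan(θ_g − θ_{gM})`. -/
theorem two_sided_perturbation :
    ∃ C > (0:ℝ), ∃ δ₀ : ℝ, 0 < δ₀ ∧ δ₀ < 1 ∧
      ∀ (g M : SL2R) (δ : ℝ) (h₁ : SL2R) (α s β : ℝ),
        M • UpperHalfPlane.I ≠ UpperHalfPlane.I →
        10 * fnorm M ≤ fnorm g →
        0 < δ → δ < δ₀ * (fnormSq M)⁻¹ →
        fnormSq h₁ ≤ 2 * Real.cosh δ →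
        |α| < δ → |s| < δ → |β| < δ →
        |fnormSq (h₁ * g * (kMat α * aMat s * kMat β) * M) - fnormSq (g * M)|
            ≤ C * δ * fnormSq g * fnormSq M ∧
        |Real.tan (theta (h₁ * g * (kMat α * aMat s * kMat β))
              - theta (h₁ * g * (kMat α * aMat s * kMat β) * M))
            - Real.tan (theta g - theta (g * M))|
            ≤ C * δ * fnormSq M ^ 2 / fnormSq g := by
  refine ⟨2800, by norm_num, 1 / 1000, by norm_num, by norm_num, ?_⟩
  intro g M δ h₁ α s β _ hgM hδ hδM hh₁ hα hs hβ
  have hm := two_le_fnormSq M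
  have hδm : δ * fnormSq M < 1 / 1000 := by
    rwa [← div_eq_mul_inv, lt_div_iff₀ (by linarith)] at hδM
  have hδ1 : δ < 1 / 2000 := by nlinarith
  have hG : 100 * fnormSq M ≤ fnormSq g := by
    have h := pow_le_pow_left₀ (mul_nonneg (by norm_num) (Real.sqrt_nonneg _)) hgM 2
    unfold fnorm at h
    rw [mul_pow, Real.sq_sqrt (by linarith),
      Real.sq_sqrt (by linarith [two_le_fnormSq g])] at h
    linarith
  obtain ⟨a₁, a₂, a₃⟩ := left_close hδ (by linarith) hh₁
  obtain ⟨b₁, b₂, b₃, b₄⟩ := right_close (by linarith) hα hs hβ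
  generalize kMat α * aMat s * kMat β = h₂ at *
  -- the effect of `h₁`, with `g' = h₁g`
  have lG := left_norm a₁ a₂ a₃ g
  have lτ := left_norm a₁ a₂ a₃ (g * M)
  have lκ := left_kap a₁ a₂ a₃ g M
  rw [← mul_assoc] at lτ
  -- the effect of `h₂` on `g'`
  have rG := right_self b₁ b₂ b₃ b₄ (by linarith) (h₁ * g)
  have rκ := right_kap b₁ b₂ b₃ b₄ (by linarith) (h₁ * g) M
  have hτ' := two_le_fnormSq (h₁ * g * M)
  have hG' := two_le_fnormSq (h₁ * g)
  have rτ := right_norm b₁ b₂ b₃ b₄ (h₁ * g) M (Real.sqrt_nonneg _)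
    (Real.sq_sqrt (mul_nonneg (mul_nonneg (by linarith) (by linarith)) (by linarith) : 0 ≤ fnormSq M * fnormSq (h₁ * g) * fnormSq (h₁ * g * M)))
  have hτG := fnormSq_le_mul g M
  have hτm := fnormSq_mul_le g M
  have hτ2 := two_le_fnormSq (g * M)
  have hκ := kap_sq_le g M
  obtain ⟨ρ, hρ, hρ2⟩ : ∃ ρ : ℝ, 0 ≤ ρ ∧ ρ ^ 2 = fnormSq M * fnormSq g * fnormSq (g * M) :=
    ⟨_, Real.sqrt_nonneg _, Real.sq_sqrt (mul_nonneg (by nlinarith) (by linarith))⟩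
  obtain ⟨dG, dτ, dκ, hρm, hG₁, hτ₁⟩ := combine hm hG hτG hτm hρ hρ2 (by linarith) hτ' hδ hδm
    hδ1 lG lτ lκ rG rτ rκ
  refine ⟨?_, ?_⟩
  · calc _ ≤ 100 * δ * ρ := dτ
      _ ≤ 2800 * δ * (fnormSq M * fnormSq g) := by gcongr; norm_num
      _ = 2800 * δ * fnormSq g * fnormSq M := by ring
  · have hτ2' : 2 < fnormSq (g * M) := by
      by_contra! h
      nlinarith only [h, hG, hτG, hm]
    rw [tan_formula g M (by linarith) hτ2', tan_formula (h₁ * g * h₂) M hG₁ hτ₁]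
    refine (quotient_le hm hG hτG hτm hρ hρ2 (abs_le_of_sq_le_sq (hκ.trans hρ2.ge) hρ)
      (by positivity) (by linarith) dG dτ dκ).trans (le_of_eq (by ring))
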